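/- Let d be a rational prime, m ≥ 2, n ≥ 1, and let c_0 be a root of the Misiurewicz polynomial G_{d,m,n}(c). Set K = ℚ(c_0), with ring of integers O_K, and a_i = f_{c_0,d}^i(0) for 1 ≤ i ≤ m+n−1. Then no non-unit element a_i of the critical orbit {a_1, …, a_{m+n−1}} is of the form β^d or −β^d for some β ∈ O_K. -/

import Mathlib

open Polynomial

noncomputable section

/-- `critPoly d i` is `f_{c,d}^i(0)` as a polynomial in the variable `c` over `ℤ`,
where `f_{c,d}(x) = x^d + c`. -/
def critPoly (d : ℕ) : ℕ → Polynomial ℤ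
  | 0 => 0
  | i + 1 => critPoly d i ^ d + X

/-- The field of rational functions in `c` over `ℚ`, realized as the fraction field of `ℤ[c]`. -/
abbrev RF : Type := FractionRing (Polynomial ℤ)

/-- The natural inclusion `ℤ[c] → ℚ(c)`. -/
def toRF (p : Polynomial ℤ) : RF := algebraMap (Polynomial ℤ) RF p

/-- `G_{d,0,n} = ∏_{k ∣ n} (f_{c,d}^k(0))^{μ(n/k)}` as a rational function. -/
def G0Rat (d n : ℕ) : RF :=
  ∏ k ∈ n.divisors, toRF (critPoly d k) ^ (ArithmeticFunction.moebius (n / k))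

/-- `F_{d,m,n}` as a rational function. -/
def FRat (d m n : ℕ) : RF :=
  ∏ k ∈ n.divisors,
    ((toRF (critPoly d (m + k)) - toRF (critPoly d m)) /
      (toRF (critPoly d (m - 1 + k)) - toRF (critPoly d (m - 1)))) ^
      (ArithmeticFunction.moebius (n / k))

/-- `G_{d,m,n}` (for `m ≥ 2`) as a rational function. -/
def GRat (d m n : ℕ) : RF :=
  if n ∣ m - 1 then FRat d m n / FRat d 1 n else FRat d m n

/-- `G : ℤ[c]` is the Misiurewicz polynomial `G_{d,m,n}` (for `m ≥ 2`). -/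
def IsMisiurewicz (d m n : ℕ) (G : Polynomial ℤ) : Prop := toRF G = GRat d m n

/-- `G0 : ℤ[c]` is the polynomial `G_{d,0,n}`. -/
def IsG0 (d n : ℕ) (G0 : Polynomial ℤ) : Prop := toRF G0 = G0Rat d n

/-!
If `c₀` is a root of `G_{d,m,n}` then the critical point `0` is preperiodic but not periodic under
`x ^ d + c₀`: for a valuation of `ℚ(c)` centred at the kernel of `c ↦ c₀`, the rational function
`G_{d,m,n}` would have value `1` if `0` were periodic or had an infinite orbit.

Every ideal `(a_i)` is then squarefree. Let `P` be a maximal ideal containing `a_i` and `L` the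
local ring of `ℤ[c₀]` below it. Just before the orbit closes up, `u = a_{m+k}` and `v = a_m` are
distinct with `u ^ d = v ^ d`. After division by a common factor if necessary, `v` is a unit of `L`
and `u ≡ v` modulo `a_i`, which forces `a_i ∣ q` in `L` for a prime `q ∣ d`. Modulo `q` the
polynomial `a_i(c)` has derivative `1`, hence is separable, so `L / (a_i)` is a field. Thus `L` is a
discrete valuation ring with uniformizer `a_i`, it equals the local ring of `O_K` at `P`, and
`a_i ∉ P ^ 2`.
-/

section CriticalOrbit

/-- The `i`-th element `f^i(0)` of the critical orbit of `f(x) = x ^ d + c`; the paper's `a_i`. -/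
def critOrbit {R : Type*} [CommSemiring R] (d : ℕ) (c : R) (i : ℕ) : R :=
  (fun x => x ^ d + c)^[i] 0

variable {R S : Type*} {d : ℕ}

@[simp]
theorem critOrbit_zero [CommSemiring R] (d : ℕ) (c : R) : critOrbit d c 0 = 0 := rfl

theorem critOrbit_succ [CommSemiring R] (d : ℕ) (c : R) (i : ℕ) :
    critOrbit d c (i + 1) = critOrbit d c i ^ d + c :=
  Function.iterate_succ_apply' _ _ _

theorem critOrbit_add [CommSemiring R] (d : ℕ) (c : R) (i j : ℕ) :
    critOrbit d c (i + j) = (fun x => x ^ d + c)^[i] (critOrbit d c j) :=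
  Function.iterate_add_apply _ _ _ _

theorem map_critOrbit [CommSemiring R] [CommSemiring S] (f : R →+* S) (d : ℕ) (c : R) (i : ℕ) :
    f (critOrbit d c i) = critOrbit d (f c) i := by
  induction i with
  | zero => exact map_zero f
  | succ i ih => rw [critOrbit_succ, critOrbit_succ, map_add, map_pow, ih]

theorem critPoly_eq_critOrbit (d i : ℕ) : critPoly d i = critOrbit d X i := by
  induction i with
  | zero => rfl
  | succ i ih => rw [critOrbit_succ, ← ih, critPoly]

theorem critOrbit_one_strictMono (hd : 1 ≤ d) : StrictMono (critOrbit d (1 : ℕ)) :=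
  strictMono_nat_of_lt_succ fun i => by
    rw [critOrbit_succ]
    exact Nat.lt_succ_of_le (Nat.le_self_pow (by omega) _)

theorem critOrbit_X_injective (hd : 1 ≤ d) : Function.Injective (critOrbit d (X : ℤ[X])) := by
  intro i j hij
  have hij' := congrArg (evalRingHom (1 : ℤ)) hij
  simp only [map_critOrbit, coe_evalRingHom, eval_X] at hij'
  refine (critOrbit_one_strictMono hd).injective (Nat.cast_injective (R := ℤ) ?_)
  simpa only [← Nat.coe_castRingHom, map_critOrbit, map_one] using hij'

theorem separable_critOrbit_X [CommRing R] (hd : (d : R) = 0) (i : ℕ) :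
    (critOrbit d (X : R[X]) (i + 1)).Separable := by
  have hderiv : derivative (critOrbit d (X : R[X]) (i + 1)) = 1 := by
    rw [critOrbit_succ, derivative_add, derivative_X, derivative_pow, hd]
    simp
  rw [Polynomial.Separable, hderiv]
  exact isCoprime_one_right

variable [CommRing R] {c : R}

theorem critOrbit_dvd_critOrbit_add_sub (d : ℕ) (c : R) (j k : ℕ) :
    critOrbit d c k ∣ critOrbit d c (j + k) - critOrbit d c j := by
  induction j with
  | zero => simp
  | succ j ih =>
    rw [Nat.succ_add, critOrbit_succ, critOrbit_succ, add_sub_add_right_eq_sub]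
    exact ih.trans (sub_dvd_pow_sub_pow _ _ _)

theorem sq_critOrbit_dvd_critOrbit_add_succ_sub (hd : 2 ≤ d) (c : R) (j k : ℕ) :
    critOrbit d c k ^ 2 ∣ critOrbit d c (j + 1 + k) - critOrbit d c (j + 1) := by
  induction j with
  | zero =>
    rw [zero_add, Nat.add_comm, critOrbit_succ, critOrbit_succ, critOrbit_zero,
      zero_pow (by omega), add_sub_add_right_eq_sub, sub_zero]
    exact pow_dvd_pow _ hd
  | succ j ih =>
    rw [Nat.succ_add, critOrbit_succ, critOrbit_succ _ _ (j + 1), add_sub_add_right_eq_sub]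
    exact ih.trans (sub_dvd_pow_sub_pow _ _ _)

theorem exists_critOrbit_eq_mul_one_add (hd : 2 ≤ d) (c : R) {p i : ℕ} (hi : 0 < i)
    (hpi : p ∣ i) : ∃ s, critOrbit d c i = critOrbit d c p * (1 + critOrbit d c p * s) := by
  suffices hsq : ∀ t, critOrbit d c p ^ 2 ∣ critOrbit d c (p * (t + 1)) - critOrbit d c p by
    obtain ⟨t, rfl⟩ := hpi
    obtain ⟨t, rfl⟩ := Nat.exists_eq_add_one_of_ne_zero (Nat.pos_of_mul_pos_left hi).ne'
    obtain ⟨s, hs⟩ := hsq t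
    exact ⟨s, by linear_combination hs⟩
  intro t
  induction t with
  | zero => simp
  | succ t ih =>
    obtain ⟨j, hj⟩ := Nat.exists_eq_add_one_of_ne_zero
      (Nat.mul_pos (Nat.pos_of_dvd_of_pos hpi hi) t.succ_pos).ne'
    have hstep := sq_critOrbit_dvd_critOrbit_add_succ_sub hd c j p
    rw [← hj, ← Nat.mul_succ] at hstep
    simpa using hstep.add ih

theorem critOrbit_add_eq_of_eq_zero {k : ℕ} (hk : critOrbit d c k = 0) (m : ℕ) :
    critOrbit d c (m + k) = critOrbit d c m := by
  rw [critOrbit_add, hk, critOrbit]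

theorem exists_critOrbit_eq_zero_iff_dvd (d : ℕ) (c : R) :
    ∃ p, ∀ j, critOrbit d c j = 0 ↔ p ∣ j :=
  ⟨Function.minimalPeriod (fun x => x ^ d + c) 0,
    fun _ => Function.isPeriodicPt_iff_minimalPeriod_dvd⟩

theorem critOrbit_eq_zero_of_add_eq {p m k : ℕ} (hp : 0 < p) (hp0 : critOrbit d c p = 0)
    (hmk : critOrbit d c (m + k) = critOrbit d c m) : critOrbit d c k = 0 := by
  obtain ⟨q, hq⟩ := exists_critOrbit_eq_zero_iff_dvd d c
  have hzero : critOrbit d c (p * m) = 0 := (hq _).2 (((hq p).1 hp0).mul_right m)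
  obtain ⟨t, ht⟩ := Nat.exists_eq_add_of_le' (Nat.le_mul_of_pos_left m hp)
  calc critOrbit d c k = critOrbit d c (k + p * m) := (critOrbit_add_eq_of_eq_zero hzero k).symm
    _ = critOrbit d c (t + (m + k)) := by rw [ht]; congr 1; omega
    _ = critOrbit d c (p * m) := by rw [critOrbit_add, hmk, ← critOrbit_add, ← ht]
    _ = 0 := hzero

end CriticalOrbit

section MisiurewiczParameter

/-- `c` is a Misiurewicz parameter of `x ^ d + c`: the critical point `0` is preperiodic but not
periodic. -/
structure IsMisiurewiczParam {R : Type*} [CommSemiring R] (d : ℕ) (c : R) : Prop where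
  not_periodic : ∀ k, 0 < k → critOrbit d c k ≠ 0
  preperiodic : ∃ m k, 0 < k ∧ critOrbit d c (m + k) = critOrbit d c m

variable {R S : Type*} [CommSemiring R] [CommSemiring S] {d : ℕ} {c : R}

theorem IsMisiurewiczParam.map (hc : IsMisiurewiczParam d c) {f : R →+* S}
    (hf : Function.Injective f) : IsMisiurewiczParam d (f c) where
  not_periodic k hk := by
    rw [← map_critOrbit]
    exact (map_ne_zero_iff f hf).2 (hc.not_periodic k hk)
  preperiodic := by
    obtain ⟨m, k, hk, hmk⟩ := hc.preperiodic
    exact ⟨m, k, hk, by rw [← map_critOrbit, ← map_critOrbit, hmk]⟩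

theorem IsMisiurewiczParam.of_map {f : R →+* S} (hf : Function.Injective f)
    (hc : IsMisiurewiczParam d (f c)) : IsMisiurewiczParam d c where
  not_periodic k hk h := hc.not_periodic k hk (by rw [← map_critOrbit, h, map_zero])
  preperiodic := by
    obtain ⟨m, k, hk, hmk⟩ := hc.preperiodic
    exact ⟨m, k, hk, hf (by rw [map_critOrbit, map_critOrbit, hmk])⟩

theorem IsMisiurewiczParam.exists_pow_eq_pow {R : Type*} [CommRing R] {c : R}
    (hc : IsMisiurewiczParam d c) :
    ∃ m k, 0 < k ∧ critOrbit d c (m + k) ≠ critOrbit d c m ∧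
      critOrbit d c (m + k) ^ d = critOrbit d c m ^ d := by
  classical
  obtain ⟨k, hk, hmk⟩ := Nat.find_spec hc.preperiodic
  obtain ⟨m, hm⟩ : ∃ m, Nat.find hc.preperiodic = m + 1 := by
    refine Nat.exists_eq_add_one_of_ne_zero fun h0 => hc.not_periodic k hk ?_
    simpa [h0] using hmk
  refine ⟨m, k, hk, fun h => Nat.find_min hc.preperiodic (by omega) ⟨k, hk, h⟩, ?_⟩
  rw [hm, Nat.succ_add, critOrbit_succ, critOrbit_succ] at hmk
  exact add_right_cancel hmk

end MisiurewiczParameter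

section LocalDivisibility

variable {L : Type*} [CommRing L] [IsDomain L]

/- The quotient `(u ^ d - v ^ d) / (u - v)` is `d * v ^ (d - 1)` modulo `u - v`. -/
theorem exists_prime_dvd_of_pow_eq_pow {a u v : L} (hv : IsUnit v) (huv : u ≠ v)
    (ha : a ∣ u - v) {d : ℕ} (hd : d ≠ 0) (hpow : u ^ d = v ^ d) :
    ∃ q : ℕ, q.Prime ∧ q ∣ d ∧ a ∣ (q : L) := by
  induction d using induction_on_primes with
  | zero => exact absurd rfl hd
  | one => exact absurd (by simpa using hpow) huv
  | prime_mul q e hq ih =>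
    rcases eq_or_ne (u ^ e) (v ^ e) with he | he
    · obtain ⟨r, hr, hre, har⟩ := ih (right_ne_zero_of_mul hd) he
      exact ⟨r, hr, hre.mul_left q, har⟩
    · refine ⟨q, hq, dvd_mul_right q e, ?_⟩
      have hsum : ∑ j ∈ Finset.range q, (u ^ e) ^ j * (v ^ e) ^ (q - 1 - j) = 0 := by
        refine (mul_eq_zero.1 ?_).resolve_right (sub_ne_zero.2 he)
        rw [(Commute.all _ _).geom_sum₂_mul, ← pow_mul, ← pow_mul, mul_comm e, hpow, sub_self]
      have hdvd := (dvd_geom_sum₂_iff_of_dvd_sub (n := q)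
        (ha.trans (sub_dvd_pow_sub_pow u v e))).1 (hsum ▸ dvd_zero a)
      exact (((hv.pow e).pow (q - 1)).dvd_mul_right).1 hdvd

theorem exists_prime_critOrbit_dvd [IsLocalRing L] {d : ℕ} {c : L} (hd : 2 ≤ d)
    (hc : IsMisiurewiczParam d c) {i : ℕ} (hi : 0 < i) (hnu : ¬ IsUnit (critOrbit d c i)) :
    ∃ q : ℕ, q.Prime ∧ q ∣ d ∧ critOrbit d c i ∣ (q : L) := by
  obtain ⟨p, hp⟩ := exists_critOrbit_eq_zero_iff_dvd d (IsLocalRing.residue L c)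
  have hpu (j : ℕ) : ¬ IsUnit (critOrbit d c j) ↔ p ∣ j := by
    rw [← IsLocalRing.residue_ne_zero_iff_isUnit, not_not, map_critOrbit, hp]
  have hpi : p ∣ i := (hpu i).1 hnu
  have hp0 : 0 < p := Nat.pos_of_dvd_of_pos hpi hi
  have hunit (s : L) : IsUnit (1 + critOrbit d c p * s) := by
    rw [← IsLocalRing.residue_ne_zero_iff_isUnit, map_add, map_mul, map_critOrbit,
      (hp p).2 dvd_rfl, zero_mul, add_zero, map_one]
    exact one_ne_zero
  have hip : critOrbit d c i ∣ critOrbit d c p := by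
    obtain ⟨s, hs⟩ := exists_critOrbit_eq_mul_one_add hd c hi hpi
    exact hs ▸ (hunit s).mul_right_dvd.2 dvd_rfl
  obtain ⟨m, k, hk, hne, hpow⟩ := hc.exists_pow_eq_pow
  have hpk : p ∣ k := by
    refine (hp k).1 (critOrbit_eq_zero_of_add_eq (m := m + 1) hp0 ((hp p).2 dvd_rfl) ?_)
    rw [Nat.succ_add, critOrbit_succ, critOrbit_succ, ← map_critOrbit, ← map_critOrbit,
      ← map_pow, ← map_pow, hpow]
  suffices h : ∃ u v : L, IsUnit v ∧ u ≠ v ∧ critOrbit d c p ∣ u - v ∧ u ^ d = v ^ d by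
    obtain ⟨u, v, hv, huv, hsub, huvd⟩ := h
    exact exists_prime_dvd_of_pow_eq_pow hv huv (hip.trans hsub) (by omega) huvd
  by_cases hpm : p ∣ m
  · have hm : 0 < m := by
      refine Nat.pos_of_ne_zero fun hm => hc.not_periodic k hk (eq_zero_of_pow_eq_zero (n := d) ?_)
      rw [← zero_add k, ← hm, hpow, hm, critOrbit_zero, zero_pow (by omega)]
    obtain ⟨s, hs⟩ := exists_critOrbit_eq_mul_one_add hd c (Nat.add_pos_left hm k) (hpm.add hpk)
    obtain ⟨t, ht⟩ := exists_critOrbit_eq_mul_one_add hd c hm hpm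
    rw [hs, ht, mul_pow, mul_pow] at hpow
    rw [hs, ht] at hne
    exact ⟨_, _, hunit t, fun h => hne (by rw [h]), ⟨s - t, by ring⟩,
      mul_left_cancel₀ (pow_ne_zero d (hc.not_periodic p hp0)) hpow⟩
  · refine ⟨_, _, not_not.1 (mt (hpu m).1 hpm), hne, ?_, hpow⟩
    obtain ⟨s, hs⟩ := exists_critOrbit_eq_mul_one_add hd c hk hpk
    exact (hs ▸ dvd_mul_right _ _ : critOrbit d c p ∣ critOrbit d c k).trans
      (critOrbit_dvd_critOrbit_add_sub d c m k)

end LocalDivisibility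

section MaximalIdeal

theorem map_eq_zero_of_separable {k B : Type*} [Field k] [CommRing B] [IsLocalRing B]
    (ψ : k[X] →+* B) {f : k[X]} (hf : f.Separable) (hf0 : ψ f = 0) {g : k[X]}
    (hg : ψ g ∈ IsLocalRing.maximalIdeal B) : ψ g = 0 := by
  obtain ⟨r, hr⟩ : ∃ r, (IsLocalRing.maximalIdeal B).comap ψ = Ideal.span {r} :=
    (IsPrincipalIdealRing.principal _).principal
  have hdvd {h : k[X]} : ψ h ∈ IsLocalRing.maximalIdeal B ↔ r ∣ h := by
    rw [← Ideal.mem_comap, hr, Ideal.mem_span_singleton]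
  obtain ⟨s, rfl⟩ := hdvd.1 (hf0 ▸ zero_mem _)
  have hs : IsUnit (ψ s) := by
    obtain ⟨a, b, hab⟩ := hf.isCoprime
    by_contra hns
    have hone := congrArg ψ hab
    rw [map_add, map_mul, map_mul, map_one] at hone
    refine (Ideal.ne_top_iff_one _).1 (IsLocalRing.maximalIdeal.isMaximal B).ne_top (hone ▸ ?_)
    exact add_mem (Ideal.mul_mem_left _ _ (hdvd.2 dvd_rfl)) (Ideal.mul_mem_left _ _ hns)
  have hr0 : ψ r = 0 := hs.mul_left_eq_zero.1 (by rw [← map_mul, hf0])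
  obtain ⟨t, rfl⟩ := hdvd.1 hg
  rw [map_mul, hr0, zero_mul]

theorem maximalIdeal_eq_span_singleton {L : Type*} [CommRing L] [IsLocalRing L] (φ : ℤ[X] →+* L)
    (hφ : ∀ x : L, ∃ Q, Associated x (φ Q)) {q : ℕ} (hq : q.Prime) {A : ℤ[X]}
    (hA : φ A ∈ IsLocalRing.maximalIdeal L) (hAq : φ A ∣ (q : L))
    (hsep : (A.map (Int.castRingHom (ZMod q))).Separable) :
    IsLocalRing.maximalIdeal L = Ideal.span {φ A} := by
  have : Fact q.Prime := ⟨hq⟩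
  set I : Ideal L := Ideal.span {φ A} with hI
  have hIm : I ≤ IsLocalRing.maximalIdeal L := (Ideal.span_singleton_le_iff_mem _).2 hA
  have : Nontrivial (L ⧸ I) := Ideal.Quotient.nontrivial_iff.2
    (ne_top_of_le_ne_top (IsLocalRing.maximalIdeal.isMaximal L).ne_top hIm)
  have : IsLocalRing (L ⧸ I) :=
    IsLocalRing.of_surjective' (Ideal.Quotient.mk I) Ideal.Quotient.mk_surjective
  have : CharP (L ⧸ I) q := by
    refine ringChar.of_eq (CharP.ringChar_of_prime_eq_zero hq ?_)
    rw [← map_natCast (Ideal.Quotient.mk I), Ideal.Quotient.eq_zero_iff_dvd]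
    exact hAq
  let ψ : (ZMod q)[X] →+* L ⧸ I :=
    eval₂RingHom (ZMod.castHom dvd_rfl (L ⧸ I)) (Ideal.Quotient.mk I (φ X))
  have hψ (Q : ℤ[X]) : ψ (Q.map (Int.castRingHom (ZMod q))) = Ideal.Quotient.mk I (φ Q) :=
    RingHom.congr_fun (f := ψ.comp (mapRingHom (Int.castRingHom (ZMod q))))
      (g := (Ideal.Quotient.mk I).comp φ) (Polynomial.ringHom_ext' (RingHom.ext_int _ _)
        (by simp [ψ])) Q
  refine le_antisymm (fun x hx => ?_) hIm
  obtain ⟨Q, hQ⟩ := hφ x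
  rw [hI, Ideal.mem_span_singleton, hQ.dvd_iff_dvd_right, ← Ideal.Quotient.eq_zero_iff_dvd, ← hI,
    ← hψ]
  refine map_eq_zero_of_separable ψ hsep ?_ ?_
  · rw [hψ, Ideal.Quotient.eq_zero_iff_mem]
    exact Ideal.mem_span_singleton_self _
  · rw [hψ, IsLocalRing.mem_maximalIdeal]
    have := IsLocalHom.of_surjective (Ideal.Quotient.mk I) Ideal.Quotient.mk_surjective
    exact map_nonunit _ _ fun hu => hx (hQ.isUnit_iff.2 hu)

end MaximalIdeal

section SquarefreeIdeal

theorem squarefree_span_singleton_of_forall_notMem_sq {O : Type*} [CommRing O] {a : O}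
    (ha : ∀ P : Ideal O, P.IsMaximal → a ∉ P ^ 2) : Squarefree (Ideal.span {a}) := by
  intro J hJ
  rw [Ideal.isUnit_iff]
  by_contra hJtop
  obtain ⟨P, hP, hJP⟩ := Ideal.exists_le_maximal J hJtop
  refine ha P hP (Ideal.pow_right_mono hJP 2 ?_)
  rw [sq]
  exact Ideal.le_of_dvd hJ (Ideal.mem_span_singleton_self a)

theorem squarefree_of_squarefree_span_singleton {O : Type*} [CommRing O] {a : O}
    (ha : Squarefree (Ideal.span {a})) : Squarefree a := by
  rintro x ⟨y, rfl⟩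
  rw [← Ideal.span_singleton_eq_top, ← Ideal.isUnit_iff]
  exact ha _ ⟨Ideal.span {y}, by simp only [Ideal.span_singleton_mul_span_singleton]⟩

theorem isUnit_of_squarefree_of_associated_pow {M : Type*} [CommMonoid M] {a b : M} {d : ℕ}
    (hd : 2 ≤ d) (ha : Squarefree a) (hab : Associated a (b ^ d)) : IsUnit a := by
  have hb : IsUnit b := ha b ((sq b ▸ pow_dvd_pow b hd).trans hab.symm.dvd)
  exact hab.isUnit_iff.2 (hb.pow d)

theorem mem_range_of_map_mul_eq_map {L B : Type*} [CommRing L] [IsDomain L] [ValuationRing L]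
    [CommRing B] [IsDomain B] (f : L →+* B) [IsLocalHom f] (hf : Function.Injective f) {s r : L}
    {b : B} (hs : s ≠ 0) (hb : f s * b = f r) : b ∈ f.range := by
  obtain ⟨t, ht | ht⟩ := ValuationRing.cond r s
  · have hr : f r ≠ 0 := (map_ne_zero_iff f hf).2 (left_ne_zero_of_mul (ht ▸ hs))
    have htb : f t * b = 1 := by
      refine mul_left_cancel₀ hr ?_
      rw [← mul_assoc, ← map_mul, ht, hb, mul_one]
    obtain ⟨u, rfl⟩ := isUnit_of_map_unit f t (IsUnit.of_mul_eq_one _ htb)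
    refine ⟨↑u⁻¹, (IsUnit.of_mul_eq_one _ htb).mul_left_cancel ?_⟩
    rw [htb, ← map_mul, u.mul_inv, map_one]
  · refine ⟨t, mul_left_cancel₀ ((map_ne_zero_iff f hf).2 hs) ?_⟩
    rw [hb, ← map_mul, ht]

section LocalRingHom

variable {R O : Type*} [CommRing R] [CommRing O] [IsDomain O] {g : R →+* O}

theorem localRingHom_comap_injective (hg : Function.Injective g) (P : Ideal O) [P.IsPrime] :
    Function.Injective (Localization.localRingHom (P.comap g) P g rfl) :=
  IsLocalization.map_injective_of_injective' _ O _
    (Localization.le_comap_primeCompl_iff.2 le_rfl) (fun h => h P.zero_mem) hg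

variable [IsDomain R]

theorem maximalIdeal_atPrime_le_map_localRingHom (hg : Function.Injective g)
    (hfrac : ∀ b : O, ∃ s r : R, s ≠ 0 ∧ g s * b = g r) (P : Ideal O) [P.IsPrime]
    [ValuationRing (Localization.AtPrime (P.comap g))] :
    IsLocalRing.maximalIdeal (Localization.AtPrime P) ≤
      (IsLocalRing.maximalIdeal (Localization.AtPrime (P.comap g))).map
        (Localization.localRingHom (P.comap g) P g rfl) := by
  set f := Localization.localRingHom (P.comap g) P g rfl
  have hfg (r : R) : f (algebraMap R _ r) = algebraMap O _ (g r) :=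
    Localization.localRingHom_to_map _ _ _ _ r
  rw [← Localization.AtPrime.map_eq_maximalIdeal, Ideal.map_le_iff_le_comap]
  intro b hb
  obtain ⟨s, r, hs, hsr⟩ := hfrac b
  obtain ⟨l, hl⟩ := mem_range_of_map_mul_eq_map f (localRingHom_comap_injective hg P)
    (b := algebraMap O _ b) (s := algebraMap R _ s) (r := algebraMap R _ r)
    ((map_ne_zero_iff _ (FaithfulSMul.algebraMap_injective R _)).2 hs)
    (by rw [hfg, hfg, ← map_mul, hsr])
  rw [Ideal.mem_comap, ← hl]
  refine Ideal.mem_map_of_mem f ?_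
  rw [← IsLocalRing.maximalIdeal_comap f, Ideal.mem_comap, hl]
  exact (IsLocalization.AtPrime.to_map_mem_maximal_iff _ P b).2 hb

/- The Noetherian local domain `R_{P ∩ R}` has principal maximal ideal, so it is a discrete
valuation ring and hence equal to the local ring `O_P`, which dominates it inside the same field. -/
theorem notMem_sq_of_maximalIdeal_eq_span_singleton [IsNoetherianRing R]
    (hg : Function.Injective g) (hfrac : ∀ b : O, ∃ s r : R, s ≠ 0 ∧ g s * b = g r)
    {P : Ideal O} [P.IsPrime] {a : R} (ha : a ≠ 0)
    (hmax : IsLocalRing.maximalIdeal (Localization.AtPrime (P.comap g)) =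
      Ideal.span {algebraMap R _ a}) : g a ∉ P ^ 2 := by
  set L := Localization.AtPrime (P.comap g)
  set B := Localization.AtPrime P
  have hprin : (IsLocalRing.maximalIdeal L).IsPrincipal := ⟨_, hmax⟩
  have : ValuationRing L :=
    ((tfae_of_isNoetherianRing_of_isLocalRing_of_isDomain L).out 4 1).1 hprin
  have hmaxB : IsLocalRing.maximalIdeal B ≤ Ideal.span {algebraMap O B (g a)} := by
    refine (maximalIdeal_atPrime_le_map_localRingHom hg hfrac P).trans_eq ?_
    rw [hmax, Ideal.map_span, Set.image_singleton, Localization.localRingHom_to_map]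
  intro hga
  have hga0 : algebraMap O B (g a) ≠ 0 := by
    rw [map_ne_zero_iff _ (FaithfulSMul.algebraMap_injective O B), map_ne_zero_iff g hg]
    exact ha
  have hdvd : algebraMap O B (g a) ^ 2 ∣ algebraMap O B (g a) := by
    rw [← Ideal.mem_span_singleton, ← Ideal.span_singleton_pow]
    refine Ideal.pow_right_mono hmaxB 2 ?_
    rw [← Localization.AtPrime.map_eq_maximalIdeal, ← Ideal.map_pow]
    exact Ideal.mem_map_of_mem _ hga
  have hunit : IsUnit (algebraMap O B (g a)) := by
    rw [sq] at hdvd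
    exact isUnit_of_dvd_one ((mul_dvd_mul_iff_left hga0).1 (by rwa [mul_one]))
  exact ((IsLocalization.AtPrime.to_map_mem_maximal_iff B P (g a)).2
    (Ideal.pow_le_self two_ne_zero hga)) hunit

end LocalRingHom

end SquarefreeIdeal

theorem squarefree_span_critOrbit {O : Type*} [CommRing O] [IsDomain O] (φ : ℤ[X] →+* O)
    (hφ : ∀ b : O, ∃ S Q, φ S ≠ 0 ∧ φ S * b = φ Q) {d : ℕ} (hd : 2 ≤ d)
    (hc : IsMisiurewiczParam d (φ X)) {i : ℕ} (hi : 0 < i) :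
    Squarefree (Ideal.span {critOrbit d (φ X) i}) := by
  refine squarefree_span_singleton_of_forall_notMem_sq fun P hP haP => ?_
  have hPprime := hP.isPrime
  rw [← map_critOrbit] at haP
  let p : Ideal φ.range := P.comap φ.range.subtype
  let φL : ℤ[X] →+* Localization.AtPrime p := (algebraMap φ.range _).comp φ.rangeRestrict
  have hcL : IsMisiurewiczParam d (φL X) :=
    (hc.of_map φ.range.subtype_injective (c := φ.rangeRestrict X)).map
      (FaithfulSMul.algebraMap_injective φ.range (Localization.AtPrime p))
  have haL : φL (critOrbit d X i) ∈ IsLocalRing.maximalIdeal (Localization.AtPrime p) :=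
    (IsLocalization.AtPrime.to_map_mem_maximal_iff _ p _).2
      (Ideal.pow_le_self two_ne_zero haP : φ _ ∈ P)
  obtain ⟨q, hq, hqd, hdvd⟩ := exists_prime_critOrbit_dvd hd hcL hi (by rwa [← map_critOrbit])
  rw [← map_critOrbit] at hdvd
  have hmax : IsLocalRing.maximalIdeal (Localization.AtPrime p) =
      Ideal.span {φL (critOrbit d X i)} := by
    refine maximalIdeal_eq_span_singleton φL (fun x => ?_) hq haL hdvd ?_
    · obtain ⟨⟨_, Q, rfl⟩, s, rfl⟩ := IsLocalization.exists_mk'_eq p.primeCompl x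
      exact ⟨Q, (IsLocalization.map_units _ s).unit, IsLocalization.mk'_spec _ _ _⟩
    · obtain ⟨i, rfl⟩ := Nat.exists_eq_add_one_of_ne_zero hi.ne'
      rw [← coe_mapRingHom, map_critOrbit, coe_mapRingHom, map_X]
      exact separable_critOrbit_X ((ZMod.natCast_eq_zero_iff d q).2 hqd) i
  refine notMem_sq_of_maximalIdeal_eq_span_singleton φ.range.subtype_injective (fun b => ?_) ?_
    hmax haP
  · obtain ⟨S, Q, hS, hSQ⟩ := hφ b
    exact ⟨φ.rangeRestrict S, φ.rangeRestrict Q, fun h => hS (congrArg Subtype.val h), hSQ⟩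
  · intro h
    refine hc.not_periodic i hi ?_
    rw [← map_critOrbit]
    exact congrArg Subtype.val h

section MisiurewiczRoots

theorem exists_valuation_eq_one_iff {R : Type*} [CommRing R] [IsDomain R] (P : Ideal R)
    [P.IsPrime] (K : Type*) [Field K] [Algebra R K] [IsFractionRing R K] :
    ∃ A : ValuationSubring K, ∀ x, A.valuation (algebraMap R K x) = 1 ↔ x ∉ P := by
  have hunits : ∀ y : P.primeCompl, IsUnit (algebraMap R K y) := fun y =>
    IsUnit.mk0 _ ((map_ne_zero_iff _ (IsFractionRing.injective R K)).2
      fun h => y.2 (h ▸ P.zero_mem))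
  let f : Localization.AtPrime P →+* K := IsLocalization.lift hunits
  have hf (x : R) : f (algebraMap R _ x) = algebraMap R K x := IsLocalization.lift_eq hunits x
  obtain ⟨A, hA, hlocal⟩ := IsLocalRing.exists_factor_valuationRing f
  refine ⟨A, fun x => ?_⟩
  rw [← hf, ← Ideal.mem_primeCompl_iff,
    ← IsLocalization.AtPrime.isUnit_to_map_iff (Localization.AtPrime P) P,
    ← isUnit_map_iff (f.codRestrict A.toSubring hA)]
  exact (A.valuation_eq_one_iff (f.codRestrict A.toSubring hA (algebraMap R _ x))).symm

theorem prod_divisors_ite_dvd_zpow_moebius {G₀ : Type*} [CommGroupWithZero G₀] {y : G₀}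
    (hy : y ≠ 0) (p : ℕ) {n : ℕ} (hn : 0 < n) :
    ∏ k ∈ n.divisors, (if p ∣ k then y else 1) ^ ArithmeticFunction.moebius (n / k) =
      if n = p then y else 1 := by
  have hprod : ∀ n > 0, ∏ k ∈ n.divisors, (if k = p then y else 1) = if p ∣ n then y else 1 := by
    intro n hn
    simp only [Finset.prod_ite_eq', Nat.mem_divisors, hn.ne', ne_eq, not_false_eq_true, and_true]
  have hinv := (ArithmeticFunction.prod_eq_iff_prod_pow_moebius_eq_of_nonzero
    (fun n _ => by split_ifs <;> simp [hy]) (fun n _ => by split_ifs <;> simp [hy])).1 hprod n hn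
  rw [← hinv]
  exact (Nat.prod_divisorsAntidiagonal' fun a b =>
    (if p ∣ b then y else 1) ^ ArithmeticFunction.moebius a).symm

/-- The quotient `(a_{m+1+k} - a_{m+1}) / (a_{m+k} - a_m)`, `a_i = critOrbit d c i`, expanded as a
polynomial in `a_{m+k}` and `a_m` so that it also makes sense when `a_{m+k} = a_m`. -/
def critQuot {R : Type*} [CommSemiring R] (d : ℕ) (c : R) (m k : ℕ) : R :=
  ∑ j ∈ Finset.range d, critOrbit d c (m + k) ^ j * critOrbit d c m ^ (d - 1 - j)

variable {R O : Type*} [CommRing R] [CommRing O] {d : ℕ}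

theorem critQuot_mul (d : ℕ) (c : R) (m k : ℕ) :
    critQuot d c m k * (critOrbit d c (m + k) - critOrbit d c m) =
      critOrbit d c (m + 1 + k) - critOrbit d c (m + 1) := by
  rw [critQuot, (Commute.all _ _).geom_sum₂_mul, Nat.succ_add, critOrbit_succ, critOrbit_succ,
    add_sub_add_right_eq_sub]

theorem critQuot_eq_of_add_eq {c : R} {m k : ℕ} (h : critOrbit d c (m + k) = critOrbit d c m) :
    critQuot d c m k = d * critOrbit d c m ^ (d - 1) := by
  rw [critQuot, h, geom_sum₂_self]

theorem map_critQuot (f : R →+* O) (d : ℕ) (c : R) (m k : ℕ) :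
    f (critQuot d c m k) = critQuot d (f c) m k := by
  simp only [critQuot, map_sum, map_mul, map_pow, map_critOrbit]

theorem critQuot_ne_zero_of_add_ne {c : R} {m k : ℕ}
    (h : critOrbit d c (m + 1 + k) ≠ critOrbit d c (m + 1)) : critQuot d c m k ≠ 0 := by
  intro h0
  rw [← sub_ne_zero, ← critQuot_mul, h0, zero_mul] at h
  exact h rfl

theorem FRat_succ (hd : 1 ≤ d) (m n : ℕ) :
    FRat d (m + 1) n = ∏ k ∈ n.divisors,
      toRF (critQuot d X m k) ^ ArithmeticFunction.moebius (n / k) := by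
  refine Finset.prod_congr rfl fun k hk => ?_
  have hk0 : 0 < k := Nat.pos_of_mem_divisors hk
  have hne : critOrbit d (X : ℤ[X]) (m + k) - critOrbit d X m ≠ 0 :=
    sub_ne_zero.2 ((critOrbit_X_injective hd).ne (by omega))
  simp only [Nat.add_sub_cancel, critPoly_eq_critOrbit, toRF, ← map_sub]
  rw [← critQuot_mul, map_mul, mul_div_cancel_right₀]
  exact (map_ne_zero_iff _ (IsFractionRing.injective _ _)).2 hne

theorem FRat_succ_ne_zero (hd : 1 ≤ d) (m n : ℕ) : FRat d (m + 1) n ≠ 0 := by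
  rw [FRat_succ hd, Finset.prod_ne_zero_iff]
  refine fun k hk => zpow_ne_zero _ ((map_ne_zero_iff _ (IsFractionRing.injective _ _)).2 ?_)
  have hk0 : 0 < k := Nat.pos_of_mem_divisors hk
  exact critQuot_ne_zero_of_add_ne ((critOrbit_X_injective hd).ne (by omega))

theorem valuation_GRat_of_not_preperiodic {Γ₀ : Type*} [LinearOrderedCommGroupWithZero Γ₀]
    (hd : 1 ≤ d) {φ : ℤ[X] →+* O} {v : Valuation RF Γ₀} (hv : ∀ F, v (toRF F) = 1 ↔ φ F ≠ 0)
    (hφ : ∀ m k, 0 < k → critOrbit d (φ X) (m + k) ≠ critOrbit d (φ X) m) (m n : ℕ) :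
    v (GRat d (m + 1) n) = 1 := by
  have hF (m : ℕ) : v (FRat d (m + 1) n) = 1 := by
    rw [FRat_succ hd, map_prod]
    refine Finset.prod_eq_one fun k hk => ?_
    rw [map_zpow₀, (hv _).2, one_zpow]
    rw [map_critQuot]
    exact critQuot_ne_zero_of_add_ne (hφ _ k (Nat.pos_of_mem_divisors hk))
  rw [GRat]
  split_ifs
  · rw [map_div₀, hF, hF 0, div_one]
  · exact hF m

variable [CharZero O]

theorem exists_critQuot_eq_mul (hd : 2 ≤ d) (φ : R →+* O) {c : R} {p : ℕ}
    (hp : critOrbit d (φ c) p = 0) {m k : ℕ} (hm : p ∣ m) (hk : p ∣ k) (hk0 : 0 < k) :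
    ∃ u, critQuot d c m k = critOrbit d c p ^ (d - 1) * u ∧ φ u ≠ 0 := by
  obtain ⟨s, hs⟩ := exists_critOrbit_eq_mul_one_add hd c (Nat.add_pos_right m hk0) (hm.add hk)
  have hφ (s : R) : φ (1 + critOrbit d c p * s) = 1 := by
    rw [map_add, map_mul, map_critOrbit, hp, map_one, zero_mul, add_zero]
  obtain ⟨w, hw, hsum⟩ : ∃ w, critOrbit d c m = critOrbit d c p * w ∧
      ∑ j ∈ Finset.range d, (1 : O) ^ j * φ w ^ (d - 1 - j) ≠ 0 := by
    rcases Nat.eq_zero_or_pos m with rfl | hm0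
    · refine ⟨0, by simp, ?_⟩
      have hgeom := (Commute.all (1 : O) 0).geom_sum₂_mul d
      rw [sub_zero, mul_one, one_pow, zero_pow (by omega), sub_zero] at hgeom
      rw [map_zero, hgeom]
      exact one_ne_zero
    · obtain ⟨t, ht⟩ := exists_critOrbit_eq_mul_one_add hd c hm0 hm
      refine ⟨_, ht, ?_⟩
      rw [hφ, geom_sum₂_self, one_pow, mul_one]
      exact Nat.cast_ne_zero.2 (by omega)
  refine ⟨∑ j ∈ Finset.range d, (1 + critOrbit d c p * s) ^ j * w ^ (d - 1 - j), ?_, ?_⟩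
  · rw [critQuot, hs, hw, Finset.mul_sum]
    refine Finset.sum_congr rfl fun j hj => ?_
    have hj : j + (d - 1 - j) = d - 1 := by have := Finset.mem_range.1 hj; omega
    rw [mul_pow, mul_pow, mul_mul_mul_comm, ← pow_add, hj]
  · simpa only [map_sum, map_mul, map_pow, hφ] using hsum

variable [IsDomain O]

theorem critQuot_ne_zero_of_not_dvd (hd : 2 ≤ d) {c : O} {p : ℕ} (hp0 : 0 < p)
    (hp : ∀ j, critOrbit d c j = 0 ↔ p ∣ j) {m k : ℕ} (hmk : ¬(p ∣ m ∧ p ∣ k)) :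
    critQuot d c m k ≠ 0 := by
  by_cases hk : p ∣ k
  · have hm : critOrbit d c m ≠ 0 := fun h => hmk ⟨(hp m).1 h, hk⟩
    rw [critQuot_eq_of_add_eq (critOrbit_add_eq_of_eq_zero ((hp k).2 hk) m)]
    exact mul_ne_zero (Nat.cast_ne_zero.2 (by omega)) (pow_ne_zero _ hm)
  · exact critQuot_ne_zero_of_add_ne fun h =>
      hk ((hp k).1 (critOrbit_eq_zero_of_add_eq hp0 ((hp p).2 dvd_rfl) h))

theorem valuation_critQuot {Γ₀ : Type*} [LinearOrderedCommGroupWithZero Γ₀] (hd : 2 ≤ d)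
    {φ : R →+* O} {v : Valuation R Γ₀} (hv : ∀ x, v x = 1 ↔ φ x ≠ 0) {c : R} {p : ℕ} (hp0 : 0 < p)
    (hp : ∀ j, critOrbit d (φ c) j = 0 ↔ p ∣ j) {m k : ℕ} (hk0 : 0 < k) :
    v (critQuot d c m k) = if p ∣ m ∧ p ∣ k then v (critOrbit d c p) ^ (d - 1) else 1 := by
  split_ifs with h
  · obtain ⟨u, hu, hu0⟩ := exists_critQuot_eq_mul hd φ ((hp p).2 dvd_rfl) h.1 h.2 hk0
    rw [hu, map_mul, map_pow, (hv u).2 hu0, mul_one]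
  · rw [hv, map_critQuot]
    exact critQuot_ne_zero_of_not_dvd hd hp0 hp h

variable {Γ₀ : Type*} [LinearOrderedCommGroupWithZero Γ₀]

theorem valuation_FRat_of_periodic (hd : 2 ≤ d) {φ : ℤ[X] →+* O} {v : Valuation RF Γ₀}
    (hv : ∀ F, v (toRF F) = 1 ↔ φ F ≠ 0) {p : ℕ} (hp0 : 0 < p)
    (hp : ∀ j, critOrbit d (φ X) j = 0 ↔ p ∣ j) (m : ℕ) {n : ℕ} (hn : 0 < n) :
    v (FRat d (m + 1) n) =
      if p ∣ m ∧ n = p then v (toRF (critOrbit d X p)) ^ (d - 1) else 1 := by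
  have hquot : ∀ k ∈ n.divisors, v (toRF (critQuot d X m k)) =
      if p ∣ m ∧ p ∣ k then v (toRF (critOrbit d X p)) ^ (d - 1) else 1 := fun k hk =>
    valuation_critQuot hd (v := v.comap (algebraMap ℤ[X] RF)) hv hp0 hp (Nat.pos_of_mem_divisors hk)
  have hne : v (toRF (critOrbit d X p)) ^ (d - 1) ≠ 0 := by
    refine pow_ne_zero _ (v.ne_zero_iff.2 ?_)
    refine (map_ne_zero_iff _ (IsFractionRing.injective ℤ[X] RF)).2 fun h => hp0.ne' ?_
    exact critOrbit_X_injective (by omega) h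
  rw [FRat_succ (by omega), map_prod]
  simp only [map_zpow₀]
  rw [Finset.prod_congr rfl fun k hk => by rw [hquot k hk]]
  by_cases hpm : p ∣ m
  · simpa only [hpm, true_and] using prod_divisors_ite_dvd_zpow_moebius hne p hn
  · simp only [hpm, false_and, if_false, one_zpow, Finset.prod_const_one]

theorem valuation_GRat_of_periodic (hd : 2 ≤ d) {φ : ℤ[X] →+* O} {v : Valuation RF Γ₀}
    (hv : ∀ F, v (toRF F) = 1 ↔ φ F ≠ 0) {p : ℕ} (hp0 : 0 < p)
    (hp : ∀ j, critOrbit d (φ X) j = 0 ↔ p ∣ j) (m : ℕ) {n : ℕ} (hn : 0 < n) :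
    v (GRat d (m + 1) n) = 1 := by
  have hF (m : ℕ) := valuation_FRat_of_periodic hd hv hp0 hp m hn
  rw [GRat, Nat.add_sub_cancel]
  split_ifs with hnm
  · have hquot : v (FRat d (m + 1) n) = v (FRat d (0 + 1) n) := by
      rw [hF, hF]
      congr 1
      simp only [dvd_zero, true_and, eq_iff_iff, and_iff_right_iff_imp]
      rintro rfl
      exact hnm
    rw [map_div₀, hquot, div_self (v.ne_zero_iff.2 (FRat_succ_ne_zero (by omega) 0 n))]
  · rw [hF, if_neg]
    rintro ⟨hpm, rfl⟩
    exact hnm hpm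

theorem isMisiurewiczParam_of_map_eq_zero (hd : 2 ≤ d) {m n : ℕ} (hn : 0 < n) {G : ℤ[X]}
    (hG : IsMisiurewicz d (m + 1) n G) (φ : ℤ[X] →+* O) (hφG : φ G = 0) :
    IsMisiurewiczParam d (φ X) := by
  have : (RingHom.ker φ).IsPrime := RingHom.ker_isPrime φ
  obtain ⟨A, hA⟩ := exists_valuation_eq_one_iff (RingHom.ker φ) RF
  have hv (F : ℤ[X]) : A.valuation (toRF F) = 1 ↔ φ F ≠ 0 := hA F
  have hG1 : A.valuation (GRat d (m + 1) n) ≠ 1 := by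
    rw [← hG, Ne, hv, not_not, hφG]
  refine ⟨fun p hp0 hp => hG1 ?_, by_contra fun hpre => hG1 ?_⟩
  · obtain ⟨q, hq⟩ := exists_critOrbit_eq_zero_iff_dvd d (φ X)
    exact valuation_GRat_of_periodic hd hv (Nat.pos_of_dvd_of_pos ((hq p).1 hp) hp0) hq m hn
  · push Not at hpre
    exact valuation_GRat_of_not_preperiodic (by omega) hv hpre m n

end MisiurewiczRoots

section NumberField

open NumberField

variable {K : Type*} [Field K]

theorem coe_aeval_ringOfIntegers (c₀ : 𝓞 K) (F : ℤ[X]) :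
    ((aeval c₀ F : 𝓞 K) : K) = aeval (c₀ : K) F :=
  (aeval_algebraMap_apply K c₀ F).symm

theorem exists_aeval_mul_eq_aeval [CharZero K] {c₀ : 𝓞 K}
    (hgen : Algebra.adjoin ℚ {(c₀ : K)} = ⊤) (b : 𝓞 K) :
    ∃ S Q : ℤ[X], aeval c₀ S ≠ 0 ∧ aeval c₀ S * b = aeval c₀ Q := by
  obtain ⟨F, hF⟩ : (b : K) ∈ (aeval (R := ℚ) (c₀ : K)).range := by
    rw [← Algebra.adjoin_singleton_eq_range_aeval, hgen]
    exact Algebra.mem_top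
  obtain ⟨N, hN, hNF⟩ := IsLocalization.integerNormalization_spec (nonZeroDivisors ℤ) F
  refine ⟨C N, IsLocalization.integerNormalization (nonZeroDivisors ℤ) F, ?_, ?_⟩
  · rw [aeval_C, algebraMap_int_eq, eq_intCast, Int.cast_ne_zero]
    exact nonZeroDivisors.ne_zero hN
  · apply RingOfIntegers.ext
    have hFK : aeval (c₀ : K) F = b := hF
    rw [coe_aeval_ringOfIntegers, ← aeval_map_algebraMap ℚ (c₀ : K), hNF, map_zsmul, hFK, aeval_C]
    simp

theorem orbit_not_pow_general {d m n : ℕ} (hd : 2 ≤ d) (hm : 2 ≤ m) (hn : 1 ≤ n) {G : ℤ[X]}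
    (hG : IsMisiurewicz d m n G) [CharZero K] {c₀ : 𝓞 K} (hroot : aeval (c₀ : K) G = 0)
    (hgen : Algebra.adjoin ℚ {(c₀ : K)} = ⊤) {i : ℕ} (hi : 1 ≤ i) :
    Squarefree (Ideal.span {(fun x => x ^ d + c₀)^[i] 0}) := by
  obtain ⟨m, rfl⟩ := Nat.exists_eq_add_of_le' (one_le_two.trans hm)
  let φ : ℤ[X] →+* 𝓞 K := (aeval c₀).toRingHom
  have hφX : φ X = c₀ := aeval_X c₀
  have hφG : φ G = 0 := RingOfIntegers.ext ((coe_aeval_ringOfIntegers c₀ G).trans hroot)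
  have hc : IsMisiurewiczParam d (φ X) := isMisiurewiczParam_of_map_eq_zero hd hn hG φ hφG
  exact hφX ▸ squarefree_span_critOrbit φ (exists_aeval_mul_eq_aeval hgen) hd hc hi

end NumberField

/-- Let `d` be a prime, `m ≥ 2`, `n ≥ 1`, and `c₀` a root of `G_{d,m,n}`,
`K = ℚ(c₀)`, `a_i = f_{c₀,d}^i(0)` for `1 ≤ i ≤ m+n-1`. Then no non-unit element `a_i` of
the critical orbit is of the form `β^d` or `-β^d` with `β ∈ O_K`. -/
theorem orbit_not_pow (d m n : ℕ) (hd : d.Prime) (hm : 2 ≤ m) (hn : 1 ≤ n)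
    (G : Polynomial ℤ) (hG : IsMisiurewicz d m n G)
    (K : Type*) [Field K] [NumberField K] (c₀ : NumberField.RingOfIntegers K)
    (hroot : Polynomial.aeval (c₀ : K) G = 0)
    (hgen : Algebra.adjoin ℚ {(c₀ : K)} = ⊤)
    (i : ℕ) (hi1 : 1 ≤ i) (hi2 : i ≤ m + n - 1)
    (hnu : ¬ IsUnit ((fun x => x ^ d + c₀)^[i] 0))
    (β : NumberField.RingOfIntegers K) :
    (fun x => x ^ d + c₀)^[i] 0 ≠ β ^ d ∧ (fun x => x ^ d + c₀)^[i] 0 ≠ -β ^ d := by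
  have hsq : Squarefree ((fun x => x ^ d + c₀)^[i] 0) := squarefree_of_squarefree_span_singleton
    (orbit_not_pow_general hd.two_le hm hn hG hroot hgen hi1)
  exact ⟨fun h => hnu (isUnit_of_squarefree_of_associated_pow hd.two_le hsq (.of_eq h)),
    fun h => hnu (isUnit_of_squarefree_of_associated_pow hd.two_le hsq
      (h ▸ (Associated.refl _).neg_left))⟩
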